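/- A continuous function f : (0,∞) → (0,∞) is operator monotone if and only if f(A ! B) ≤ f(A) ! f(B) for every n ∈ ℕ and all n×n positive definite complex matrices A, B. -/

import Mathlib

open Matrix
open scoped ComplexOrder

/-- The Loewner order on matrices: `A ≤ B` iff `B - A` is positive semidefinite. -/
def MLE {n : ℕ} (A B : Matrix (Fin n) (Fin n) ℂ) : Prop := (B - A).PosSemidef

/-- The `t`-weighted harmonic mean `A !_t B = ((1-t)A⁻¹ + tB⁻¹)⁻¹`. -/
noncomputable def wharm {n : ℕ} (t : ℝ) (A B : Matrix (Fin n) (Fin n) ℂ) :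
    Matrix (Fin n) (Fin n) ℂ := ((1 - t) • A⁻¹ + t • B⁻¹)⁻¹

/-- The `t`-weighted arithmetic mean `A ∇_t B = (1-t)A + tB`. -/
noncomputable def warith {n : ℕ} (t : ℝ) (A B : Matrix (Fin n) (Fin n) ℂ) :
    Matrix (Fin n) (Fin n) ℂ := (1 - t) • A + t • B

/-- Real powers of a matrix, via the continuous functional calculus. -/
noncomputable def mpow {n : ℕ} (A : Matrix (Fin n) (Fin n) ℂ) (r : ℝ) :
    Matrix (Fin n) (Fin n) ℂ := cfc (fun x : ℝ => x ^ r) A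

/-- The `t`-weighted geometric mean `A #_t B = A^{1/2} (A^{-1/2} B A^{-1/2})^t A^{1/2}`. -/
noncomputable def wgeom {n : ℕ} (t : ℝ) (A B : Matrix (Fin n) (Fin n) ℂ) :
    Matrix (Fin n) (Fin n) ℂ :=
  mpow A (1/2) * mpow (mpow A (-(1/2)) * B * mpow A (-(1/2))) t * mpow A (1/2)

/-- `f` is operator monotone (increasing): order preserving on positive definite
matrices of every size, via the continuous functional calculus. -/
def OperatorMonotone (f : ℝ → ℝ) : Prop :=
  ∀ (n : ℕ) (A B : Matrix (Fin n) (Fin n) ℂ), A.PosDef → B.PosDef →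
    MLE A B → MLE (cfc f A) (cfc f B)

/-- `f` is operator monotone decreasing: order reversing on positive definite
matrices of every size, via the continuous functional calculus. -/
def OperatorAntitone (f : ℝ → ℝ) : Prop :=
  ∀ (n : ℕ) (A B : Matrix (Fin n) (Fin n) ℂ), A.PosDef → B.PosDef →
    MLE A B → MLE (cfc f B) (cfc f A)

/-!
Conjugating by inversion, `f*(x) = f(x⁻¹)⁻¹`, turns the harmonic inequality for `f` into the
concavity inequality for `f*` and preserves operator monotonicity, because inversion reverses the
Loewner order. It remains to see that a positive continuous `g` is operator monotone if and only
if it is operator concave at one weight `t ∈ (0, 1)`.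

* If `g` is operator monotone, then `[P b; bᴴ R] ≤ [P + ε 0; 0 R + ε⁻¹ bᴴ b]` shows, as `ε → 0`,
  that compressing `g(T)` to a corner gives at most `g` of the corner of `T`. Apply this to the
  block matrix `diag(X, Y)` rotated so that its corner is `(1 - t) X + t Y`.
* If `g` is concave at `t` and `A ≤ B`, then `B = (1 - t) A + t Y` with `A ≤ Y`. Hence
  `g(B) ≥ c g(A)` for all such pairs improves to `g(B) ≥ ((1 - t) + t c) g(A)`, and the iteration
  started at `c = 0` converges to `g(B) ≥ g(A)`.
-/

/-- The Kubo–Ando adjoint `f*(x) = f(x⁻¹)⁻¹` of a function on `(0, ∞)`. -/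
noncomputable def kuboAndoAdjoint (f : ℝ → ℝ) : ℝ → ℝ := fun x ↦ (f x⁻¹)⁻¹

/-- The operator concavity inequality for the single weight `t`, on positive definite matrices of
every size: `g(A) ∇_t g(B) ≤ g(A ∇_t B)`. Operator midpoint concavity is the case `t = 2⁻¹`. -/
def OperatorConcaveAt (t : ℝ) (g : ℝ → ℝ) : Prop :=
  ∀ (n : ℕ) (A B : Matrix (Fin n) (Fin n) ℂ), A.PosDef → B.PosDef →
    MLE (warith t (cfc g A) (cfc g B)) (cfc g (warith t A B))

section

open Set Filter Topology
open scoped MatrixOrder Matrix.Norms.L2Operator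

variable {ι κ : Type*} [Fintype ι] [DecidableEq ι] [Fintype κ] [DecidableEq κ]
variable {A B : Matrix ι ι ℂ} {f g : ℝ → ℝ} {n : ℕ} {t : ℝ}

/-! ### The functional calculus on positive definite matrices -/

lemma continuousOn_spectrum (f : ℝ → ℝ) (A : Matrix ι ι ℂ) : ContinuousOn f (spectrum ℝ A) :=
  A.finite_real_spectrum.continuousOn f

lemma spectrum_subset_Ioi_of_posDef (hA : A.PosDef) : spectrum ℝ A ⊆ Ioi 0 := by
  rw [hA.isHermitian.spectrum_real_eq_range_eigenvalues]
  exact range_subset_iff.2 hA.eigenvalues_pos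

lemma posDef_cfc (hf : MapsTo f (Ioi 0) (Ioi 0)) (hA : A.PosDef) : (cfc f A).PosDef := by
  have hf_pos : ∀ x ∈ spectrum ℝ A, 0 < f x := fun x hx ↦ hf (spectrum_subset_Ioi_of_posDef hA hx)
  have h_nonneg : (cfc f A).PosSemidef :=
    nonneg_iff_posSemidef.1 (cfc_nonneg fun x hx ↦ (hf_pos x hx).le)
  have h_unit : IsUnit (cfc f A) :=
    (isUnit_cfc_iff f A (continuousOn_spectrum f A) hA.isHermitian).2 fun x hx ↦ (hf_pos x hx).ne'
  exact h_nonneg.posDef_iff_isUnit.2 h_unit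

lemma continuousOn_cfc_posDef (hf : ContinuousOn f (Ioi 0)) :
    ContinuousOn (cfc f) {A : Matrix ι ι ℂ | A.PosDef} := by
  refine ContinuousOn.cfc_of_mem_nhdsSet f ?_ continuousOn_id (fun A hA ↦ hA.isHermitian) hf
  exact isOpen_Ioi.mem_nhdsSet.2 (iUnion₂_subset fun A hA ↦ spectrum_subset_Ioi_of_posDef hA)

lemma cfc_reindex (hA : A.IsHermitian) (f : ℝ → ℝ) (e : ι ≃ κ) :
    cfc f (reindex e e A) = reindex e e (cfc f A) := by
  let φ : Matrix ι ι ℂ →⋆ₐ[ℝ] Matrix κ κ ℂ :=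
    { (reindexAlgEquiv ℝ ℂ e).toAlgHom with map_star' := fun _ ↦ rfl }
  have hφ : Continuous φ := continuous_id.matrix_reindex e e
  exact (φ.map_cfc f A (continuousOn_spectrum f A) hφ hA (hA.submatrix _)).symm

lemma cfc_fromBlocks_diagonal {D : Matrix κ κ ℂ} (hA : A.IsHermitian) (hD : D.IsHermitian)
    (f : ℝ → ℝ) : cfc f (fromBlocks A 0 0 D) = fromBlocks (cfc f A) 0 0 (cfc f D) := by
  let φ : Matrix ι ι ℂ × Matrix κ κ ℂ →⋆ₐ[ℝ] Matrix (ι ⊕ κ) (ι ⊕ κ) ℂ :=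
    { toFun := fun M ↦ fromBlocks M.1 0 0 M.2
      map_one' := fromBlocks_one
      map_mul' := fun M N ↦ by simp [fromBlocks_multiply]
      map_zero' := fromBlocks_zero
      map_add' := fun M N ↦ by simp [fromBlocks_add]
      commutes' := fun r ↦ by
        simp [Algebra.algebraMap_eq_smul_one, ← fromBlocks_one, fromBlocks_smul]
      map_star' := fun M ↦ by simp [star_eq_conjTranspose, fromBlocks_conjTranspose] }
  have hφ : Continuous φ :=
    continuous_fst.matrix_fromBlocks continuous_const continuous_const continuous_snd
  have : ContinuousFunctionalCalculus ℝ (Matrix ι ι ℂ × Matrix κ κ ℂ) IsSelfAdjoint :=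
    IsSelfAdjoint.instContinuousFunctionalCalculus
  have hAD : IsSelfAdjoint (A, D) := Prod.ext hA hD
  have hf : ContinuousOn f (spectrum ℝ A ∪ spectrum ℝ D) :=
    (A.finite_real_spectrum.union D.finite_real_spectrum).continuousOn f
  calc cfc f (φ (A, D)) = φ (cfc f (A, D)) :=
        (φ.map_cfc f (A, D) (by rwa [Prod.spectrum_eq]) hφ hAD (hAD.map φ)).symm
    _ = fromBlocks (cfc f A) 0 0 (cfc f D) := by
        rw [cfc_map_prod (S := ℝ) f A D hf hAD hA hD]; rfl

lemma cfc_unitary_conjugate {U : Matrix ι ι ℂ} (hU : U ∈ unitary (Matrix ι ι ℂ))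
    (hA : A.IsHermitian) (f : ℝ → ℝ) : cfc f (U * A * star U) = U * cfc f A * star U := by
  let φ := Unitary.conjStarAlgAut ℝ (Matrix ι ι ℂ) ⟨U, hU⟩
  have hφ : Continuous φ := (continuous_id.const_mul U).mul_const (star U)
  exact (StarAlgHomClass.map_cfc (S := ℝ) φ f A (continuousOn_spectrum f A) hφ hA
    (hA.isSelfAdjoint.map φ)).symm

/-! ### Inversion and the Loewner order -/

lemma mle_iff_le {A B : Matrix (Fin n) (Fin n) ℂ} : MLE A B ↔ A ≤ B := Iff.rfl

lemma inv_inv_of_posDef (hA : A.PosDef) : A⁻¹⁻¹ = A :=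
  nonsing_inv_nonsing_inv A ((isUnit_iff_isUnit_det A).1 hA.isUnit)

lemma inv_le_inv_of_posDef (hA : A.PosDef) (hAB : A ≤ B) : B⁻¹ ≤ A⁻¹ := by
  simpa only [nonsing_inv_eq_ringInverse] using
    CStarAlgebra.ringInverse_le_ringInverse hAB (isStrictlyPositive_iff_posDef.2 hA)

lemma le_inv_comm_of_posDef (hA : A.PosDef) (hB : B.PosDef) : A ≤ B⁻¹ ↔ B ≤ A⁻¹ :=
  ⟨fun h ↦ inv_inv_of_posDef hB ▸ inv_le_inv_of_posDef hA h,
    fun h ↦ inv_inv_of_posDef hA ▸ inv_le_inv_of_posDef hB h⟩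

lemma posDef_warith {A B : Matrix (Fin n) (Fin n) ℂ} (ht : t ∈ Ioo 0 1) (hA : A.PosDef)
    (hB : B.PosDef) : (warith t A B).PosDef :=
  (hA.smul (sub_pos.2 ht.2)).add (hB.smul ht.1)

/-! ### The Kubo–Ando adjoint -/

lemma kuboAndoAdjoint_involutive : Function.Involutive kuboAndoAdjoint :=
  fun f ↦ funext fun x ↦ by simp only [kuboAndoAdjoint, inv_inv]

lemma mapsTo_inv_Ioi : MapsTo (·⁻¹ : ℝ → ℝ) (Ioi 0) (Ioi 0) := fun _ hx ↦
  mem_Ioi.2 (inv_pos.2 hx)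

lemma mapsTo_kuboAndoAdjoint (hf : MapsTo f (Ioi 0) (Ioi 0)) :
    MapsTo (kuboAndoAdjoint f) (Ioi 0) (Ioi 0) :=
  mapsTo_inv_Ioi.comp (hf.comp mapsTo_inv_Ioi)

lemma continuousOn_kuboAndoAdjoint (hfc : ContinuousOn f (Ioi 0))
    (hf : MapsTo f (Ioi 0) (Ioi 0)) : ContinuousOn (kuboAndoAdjoint f) (Ioi 0) :=
  (hfc.comp (continuousOn_inv₀.mono fun _ hx ↦ ne_of_gt hx) mapsTo_inv_Ioi).inv₀
    fun _ hx ↦ ne_of_gt (hf (mapsTo_inv_Ioi hx))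

lemma cfc_kuboAndoAdjoint (hf : MapsTo f (Ioi 0) (Ioi 0)) (hA : A.PosDef) :
    cfc (kuboAndoAdjoint f) A = (cfc f A⁻¹)⁻¹ := by
  have hf_inv_ne : ∀ x ∈ spectrum ℝ A, f x⁻¹ ≠ 0 := fun x hx ↦
    ne_of_gt (hf (mapsTo_inv_Ioi (spectrum_subset_Ioi_of_posDef hA hx)))
  have h_inv : cfc (·⁻¹ : ℝ → ℝ) A = A⁻¹ := by
    rw [nonsing_inv_eq_ringInverse]
    exact cfc_ringInverse_id A hA.isUnit hA.isHermitian
  have h_comp : cfc (fun x ↦ f x⁻¹) A = cfc f A⁻¹ := by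
    rw [← h_inv]
    exact cfc_comp' f (·⁻¹) A ((A.finite_real_spectrum.image _).continuousOn f)
      (continuousOn_spectrum _ A) hA.isHermitian
  rw [← h_comp, nonsing_inv_eq_ringInverse]
  exact cfc_inv _ A hf_inv_ne (continuousOn_spectrum _ A) hA.isHermitian

lemma OperatorMonotone.kuboAndoAdjoint (hf : MapsTo f (Ioi 0) (Ioi 0))
    (hmono : OperatorMonotone f) : OperatorMonotone (kuboAndoAdjoint f) := by
  intro n A B hA hB hAB
  rw [cfc_kuboAndoAdjoint hf hA, cfc_kuboAndoAdjoint hf hB]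
  exact inv_le_inv_of_posDef (posDef_cfc hf hB.inv)
    (hmono n _ _ hB.inv hA.inv (inv_le_inv_of_posDef hA hAB))

lemma operatorMonotone_kuboAndoAdjoint_iff (hf : MapsTo f (Ioi 0) (Ioi 0)) :
    OperatorMonotone (kuboAndoAdjoint f) ↔ OperatorMonotone f :=
  ⟨fun h ↦ kuboAndoAdjoint_involutive f ▸ h.kuboAndoAdjoint (mapsTo_kuboAndoAdjoint hf),
    fun h ↦ h.kuboAndoAdjoint hf⟩

lemma warith_cfc_kuboAndoAdjoint_le_iff {A B : Matrix (Fin n) (Fin n) ℂ} (ht : t ∈ Ioo 0 1)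
    (hf : MapsTo f (Ioi 0) (Ioi 0)) (hA : A.PosDef) (hB : B.PosDef) :
    warith t (cfc (kuboAndoAdjoint f) A) (cfc (kuboAndoAdjoint f) B) ≤
        cfc (kuboAndoAdjoint f) (warith t A B) ↔
      cfc f (wharm t A⁻¹ B⁻¹) ≤ wharm t (cfc f A⁻¹) (cfc f B⁻¹) := by
  have h_wharm : wharm t A⁻¹ B⁻¹ = (warith t A B)⁻¹ := by
    rw [wharm, inv_inv_of_posDef hA, inv_inv_of_posDef hB, warith]
  have hAB := posDef_warith ht hA hB
  rw [cfc_kuboAndoAdjoint hf hA, cfc_kuboAndoAdjoint hf hB, cfc_kuboAndoAdjoint hf hAB, h_wharm]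
  exact le_inv_comm_of_posDef
    (posDef_warith ht (posDef_cfc hf hA.inv).inv (posDef_cfc hf hB.inv).inv)
    (posDef_cfc hf hAB.inv)

lemma operatorConcaveAt_kuboAndoAdjoint_iff (ht : t ∈ Ioo 0 1) (hf : MapsTo f (Ioi 0) (Ioi 0)) :
    OperatorConcaveAt t (kuboAndoAdjoint f) ↔
      ∀ (n : ℕ) (A B : Matrix (Fin n) (Fin n) ℂ), A.PosDef → B.PosDef →
        MLE (cfc f (wharm t A B)) (wharm t (cfc f A) (cfc f B)) := by
  refine ⟨fun h n A B hA hB ↦ ?_, fun h n A B hA hB ↦ ?_⟩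
  · simpa only [mle_iff_le, inv_inv_of_posDef hA, inv_inv_of_posDef hB] using
      (warith_cfc_kuboAndoAdjoint_le_iff ht hf hA.inv hB.inv).1 (h n _ _ hA.inv hB.inv)
  · exact (warith_cfc_kuboAndoAdjoint_le_iff ht hf hA hB).2 (h n _ _ hA.inv hB.inv)

/-! ### Operator monotone functions are operator concave -/

lemma OperatorMonotone.cfc_le_cfc (hg : OperatorMonotone g) (hA : A.PosDef) (hB : B.PosDef)
    (hAB : A ≤ B) : cfc g A ≤ cfc g B := by
  let e := Fintype.equivFin ι
  have h := hg _ _ _ (hA.submatrix e.symm.injective) (hB.submatrix e.symm.injective)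
    (PosSemidef.submatrix hAB e.symm)
  rw [← reindex_apply, ← reindex_apply, cfc_reindex hA.isHermitian, cfc_reindex hB.isHermitian]
    at h
  exact (posSemidef_submatrix_equiv e.symm).1 h

lemma posDef_fromBlocks_diagonal {ι κ : Type*} [Finite ι] [Finite κ] {A : Matrix ι ι ℂ}
    {D : Matrix κ κ ℂ} (hA : A.PosDef) (hD : D.PosDef) : (fromBlocks A 0 0 D).PosDef := by
  classical
  have := Fintype.ofFinite ι
  have := Fintype.ofFinite κ
  have := hA.isUnit.invertible
  have h_nonneg : (fromBlocks A 0 0 D).PosSemidef := by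
    simpa using (PosDef.fromBlocks₁₁ (0 : Matrix ι κ ℂ) D hA).2 (by simpa using hD.posSemidef)
  exact h_nonneg.posDef_iff_isUnit.2 (by simp [hA.isUnit, hD.isUnit])

lemma fromBlocks_le_fromBlocks_diagonal {κ : Type*} [Finite κ] (P : Matrix ι ι ℂ)
    (b : Matrix ι κ ℂ) (R : Matrix κ κ ℂ) {ε : ℝ} (hε : 0 < ε) :
    fromBlocks P b bᴴ R ≤ fromBlocks (P + ε • 1) 0 0 (R + ε⁻¹ • (bᴴ * b)) := by
  have := Fintype.ofFinite κ
  let N : Matrix (ι ⊕ κ) (ι ⊕ κ) ℂ := fromBlocks (ε • 1) (-b) 0 0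
  have h_sub : fromBlocks (P + ε • 1) 0 0 (R + ε⁻¹ • (bᴴ * b)) - fromBlocks P b bᴴ R =
      ε⁻¹ • (Nᴴ * N) := by
    simp [N, sub_eq_add_neg, fromBlocks_neg, fromBlocks_add, fromBlocks_conjTranspose,
      fromBlocks_multiply, fromBlocks_smul, smul_smul, hε.ne']
  rw [Matrix.le_iff, h_sub]
  exact (posSemidef_conjTranspose_mul_self N).smul (inv_pos.2 hε).le

lemma OperatorMonotone.toBlocks₁₁_cfc_le (hgc : ContinuousOn g (Ioi 0)) (hg : OperatorMonotone g)
    {T : Matrix (ι ⊕ κ) (ι ⊕ κ) ℂ} (hT : T.PosDef) :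
    (cfc g T).toBlocks₁₁ ≤ cfc g T.toBlocks₁₁ := by
  set P := T.toBlocks₁₁
  set b := T.toBlocks₁₂
  set R := T.toBlocks₂₂
  have hP : P.PosDef := hT.submatrix Sum.inl_injective
  have hPε : ∀ ε : ℝ, 0 ≤ ε → (P + ε • (1 : Matrix ι ι ℂ)).PosDef := fun ε hε ↦
    hP.add_posSemidef (PosSemidef.one.smul hε)
  have h_le : ∀ ε : ℝ, 0 < ε → (cfc g T).toBlocks₁₁ ≤ cfc g (P + ε • 1) := by
    intro ε hε
    let D := fromBlocks (P + ε • 1) 0 0 (R + ε⁻¹ • (bᴴ * b))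
    have hTD : T ≤ D := by
      have hb : T.toBlocks₂₁ = bᴴ := congrArg toBlocks₂₁ hT.isHermitian.symm
      calc T = fromBlocks P b bᴴ R := by rw [← hb, fromBlocks_toBlocks]
        _ ≤ D := fromBlocks_le_fromBlocks_diagonal P b _ hε
    have hD : D.PosDef := add_sub_cancel T D ▸ hT.add_posSemidef hTD
    have hD₂₂ : (R + ε⁻¹ • (bᴴ * b)).IsHermitian := hD.isHermitian.submatrix Sum.inr
    have h_cfc : cfc g T ≤ cfc g D := hg.cfc_le_cfc hT hD hTD
    rw [cfc_fromBlocks_diagonal (hPε ε hε.le).isHermitian hD₂₂] at h_cfc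
    exact PosSemidef.submatrix h_cfc Sum.inl
  have h_shift : Tendsto (fun ε : ℝ ↦ P + ε • (1 : Matrix ι ι ℂ)) (𝓝[>] 0)
      (𝓝[{A | A.PosDef}] P) := by
    refine tendsto_nhdsWithin_iff.2 ⟨?_, eventually_mem_nhdsWithin.mono fun ε hε ↦ hPε ε hε.le⟩
    have h_cont : Continuous fun ε : ℝ ↦ P + ε • (1 : Matrix ι ι ℂ) := by fun_prop
    simpa using h_cont.continuousWithinAt.tendsto (x := 0)
  exact ge_of_tendsto ((continuousOn_cfc_posDef hgc P hP).tendsto.comp h_shift)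
    (eventually_mem_nhdsWithin.mono h_le)

/-- The block rotation `[c s; -s c]`, which is unitary when `c² + s² = 1`. -/
noncomputable def blockRotation (ι : Type*) [DecidableEq ι] (c s : ℝ) : Matrix (ι ⊕ ι) (ι ⊕ ι) ℂ :=
  fromBlocks (c • 1) (s • 1) (-(s • 1)) (c • 1)

lemma star_blockRotation {ι : Type*} [DecidableEq ι] (c s : ℝ) :
    star (blockRotation ι c s) = blockRotation ι c (-s) := by
  simp [blockRotation, star_eq_conjTranspose, fromBlocks_conjTranspose]

lemma blockRotation_mem_unitary {c s : ℝ} (hcs : c * c + s * s = 1) :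
    blockRotation ι c s ∈ unitary (Matrix (ι ⊕ ι) (ι ⊕ ι) ℂ) := by
  rw [Unitary.mem_iff, star_blockRotation]
  constructor <;>
    simp [blockRotation, fromBlocks_multiply, smul_smul, mul_comm s c, ← add_smul, hcs,
      add_comm (s * s)]

lemma toBlocks₁₁_blockRotation_conjugate (c s : ℝ) (A B : Matrix ι ι ℂ) :
    (blockRotation ι c s * fromBlocks A 0 0 B * star (blockRotation ι c s)).toBlocks₁₁ =
      (c * c) • A + (s * s) • B := by
  rw [star_blockRotation]
  simp [blockRotation, fromBlocks_multiply, smul_smul]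

lemma OperatorMonotone.operatorConcaveAt (ht : t ∈ Icc 0 1) (hgc : ContinuousOn g (Ioi 0))
    (hg : OperatorMonotone g) : OperatorConcaveAt t g := by
  intro n A B hA hB
  have hc : √(1 - t) * √(1 - t) = 1 - t := Real.mul_self_sqrt (sub_nonneg.2 ht.2)
  have hs : √t * √t = t := Real.mul_self_sqrt ht.1
  set U := blockRotation (Fin n) √(1 - t) √t
  have hU : U ∈ unitary _ := blockRotation_mem_unitary (by rw [hc, hs, sub_add_cancel])
  have h_corner : ∀ M N : Matrix (Fin n) (Fin n) ℂ,
      (U * fromBlocks M 0 0 N * star U).toBlocks₁₁ = warith t M N := fun M N ↦ by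
    rw [toBlocks₁₁_blockRotation_conjugate, hc, hs, warith]
  have hAB := posDef_fromBlocks_diagonal hA hB
  have hUAB : (U * fromBlocks A 0 0 B * star U).PosDef :=
    (IsUnit.of_mul_eq_one _ (Unitary.mul_star_self_of_mem hU)).posDef_star_right_conjugate_iff.2 hAB
  have h_compress := hg.toBlocks₁₁_cfc_le hgc hUAB
  rwa [cfc_unitary_conjugate hU hAB.isHermitian,
    cfc_fromBlocks_diagonal hA.isHermitian hB.isHermitian, h_corner, h_corner] at h_compress

/-! ### Positive operator concave functions are operator monotone -/

lemma OperatorConcaveAt.smul_cfc_le_cfc (ht : t ∈ Ioo 0 1) (hg : MapsTo g (Ioi 0) (Ioi 0))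
    (hconc : OperatorConcaveAt t g) (k : ℕ) {A B : Matrix (Fin n) (Fin n) ℂ} (hA : A.PosDef)
    (hAB : A ≤ B) : (1 - t ^ k) • cfc g A ≤ cfc g B := by
  induction k generalizing B with
  | zero =>
    have hB : B.PosDef := add_sub_cancel A B ▸ hA.add_posSemidef hAB
    simpa using (posDef_cfc hg hB).posSemidef.nonneg
  | succ k ih =>
    set Y := A + t⁻¹ • (B - A)
    have hAY : A ≤ Y := le_add_of_nonneg_right (hAB.smul (inv_pos.2 ht.1).le).nonneg
    have hY : Y.PosDef := hA.add_posSemidef (hAB.smul (inv_pos.2 ht.1).le)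
    have h_warith : warith t A Y = B := by
      simp only [warith, Y, smul_add, smul_inv_smul₀ ht.1.ne']
      module
    calc (1 - t ^ (k + 1)) • cfc g A
        = (1 - t) • cfc g A + t • ((1 - t ^ k) • cfc g A) := by rw [pow_succ]; module
      _ ≤ (1 - t) • cfc g A + t • cfc g Y := by
          gcongr
          · exact ht.1.le
          · exact ih hAY
      _ ≤ cfc g (warith t A Y) := hconc n A Y hA hY
      _ = cfc g B := by rw [h_warith]

lemma OperatorConcaveAt.operatorMonotone (ht : t ∈ Ioo 0 1) (hg : MapsTo g (Ioi 0) (Ioi 0))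
    (hconc : OperatorConcaveAt t g) : OperatorMonotone g := by
  intro n A B hA _ hAB
  have h_coeff : Tendsto (fun k : ℕ ↦ 1 - t ^ k) atTop (𝓝 1) := by
    simpa using (tendsto_pow_atTop_nhds_zero_of_lt_one ht.1.le ht.2).const_sub 1
  have h_lim : Tendsto (fun k : ℕ ↦ (1 - t ^ k) • cfc g A) atTop (𝓝 (cfc g A)) := by
    simpa using h_coeff.smul_const (cfc g A)
  exact le_of_tendsto' h_lim fun k ↦ hconc.smul_cfc_le_cfc ht hg k hA hAB

lemma operatorMonotone_iff_operatorConcaveAt (ht : t ∈ Ioo 0 1) (hgc : ContinuousOn g (Ioi 0))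
    (hg : MapsTo g (Ioi 0) (Ioi 0)) : OperatorMonotone g ↔ OperatorConcaveAt t g :=
  ⟨fun h ↦ h.operatorConcaveAt (Ioo_subset_Icc_self ht) hgc, fun h ↦ h.operatorMonotone ht hg⟩

end

theorem stmt_5_general {t : ℝ} (ht : t ∈ Set.Ioo 0 1) {f : ℝ → ℝ}
    (hfc : ContinuousOn f (Set.Ioi 0)) (hf : Set.MapsTo f (Set.Ioi 0) (Set.Ioi 0)) :
    OperatorMonotone f ↔
      ∀ (n : ℕ) (A B : Matrix (Fin n) (Fin n) ℂ), A.PosDef → B.PosDef →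
        MLE (cfc f (wharm t A B)) (wharm t (cfc f A) (cfc f B)) :=
  calc OperatorMonotone f
    _ ↔ OperatorMonotone (kuboAndoAdjoint f) := (operatorMonotone_kuboAndoAdjoint_iff hf).symm
    _ ↔ OperatorConcaveAt t (kuboAndoAdjoint f) :=
      operatorMonotone_iff_operatorConcaveAt ht (continuousOn_kuboAndoAdjoint hfc hf)
        (mapsTo_kuboAndoAdjoint hf)
    _ ↔ _ := operatorConcaveAt_kuboAndoAdjoint_iff ht hf

theorem stmt_5 (f : ℝ → ℝ) (hf : ContinuousOn f (Set.Ioi 0))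
    (hf' : ∀ x ∈ Set.Ioi (0:ℝ), f x ∈ Set.Ioi (0:ℝ)) :
    OperatorMonotone f ↔
      ∀ (n : ℕ) (A B : Matrix (Fin n) (Fin n) ℂ), A.PosDef → B.PosDef →
        MLE (cfc f (wharm 2⁻¹ A B)) (wharm 2⁻¹ (cfc f A) (cfc f B)) :=
  stmt_5_general (by norm_num) hf hf'
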